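/- For $p\in\mathbb{R}[x_1,\dots,x_n]$ let $\mathrm{Support}(p)\subseteq\mathbb{N}^n\subseteq\mathbb{R}^n$ be the set of exponent vectors of the monomials appearing in $p$ with nonzero coefficient, and let the Newton polytope $\mathrm{New}(p)$ be the convex hull of $\mathrm{Support}(p)$ in $\mathbb{R}^n$. A face of a polytope $N\subseteq\mathbb{R}^n$ is a nonempty proper subset $F\subsetneq N$ for which there is an affine function $\pi:\mathbb{R}^n\to\mathbb{R}$ with $\pi=0$ on $F$ and $\pi>0$ on $N\setminus F$ (so $N$ itself is not counted as a face). Call $p$ a convex cover polynomial if there exist finitely many pairwise disjoint faces $F_1,\dots,F_u$ of $\mathrm{New}(p)$ with $\mathrm{Support}(p)\subseteq F_1\cup\dots\cup F_u$. Let $p=x_1^4x_2^2x_3^2+x_1^2x_2^4x_3^2-2x_1^2x_2^2x_3^2+x_3^2+x_1^2x_2^2+x_1^2x_2^2x_3^4\in\mathbb{R}[x_1,x_2,x_3]$. Then $p$ is not a convex cover polynomial; indeed, its support point $(2,2,2)$ lies in the interior (in $\mathbb{R}^3$) of its Newton polytope $\mathrm{New}(p)$. -/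

import Mathlib

open MvPolynomial

noncomputable section

/-- Embed an exponent vector `a ∈ ℕⁿ` into `ℝⁿ`. -/
def toR {n : ℕ} (a : Fin n →₀ ℕ) : Fin n → ℝ := fun i => (a i : ℝ)

/-- The Newton polytope of `p`: convex hull of its support in `ℝⁿ`. -/
def newton {n : ℕ} (p : MvPolynomial (Fin n) ℝ) : Set (Fin n → ℝ) :=
  convexHull ℝ (toR '' (p.support : Set (Fin n →₀ ℕ)))

/-- `F` is a face of the polytope `N`. The faces of a `d`-dimensional polytope have
dimensions from `0` to `d - 1`: they are nonempty, and `N` itself is not counted as a face.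
A face is cut out by an affine function that vanishes on `F` and is positive on `N \ F`. -/
def IsFace {n : ℕ} (N F : Set (Fin n → ℝ)) : Prop :=
  F ⊆ N ∧ F.Nonempty ∧ F ≠ N ∧
    ∃ π : (Fin n → ℝ) →ᵃ[ℝ] ℝ, (∀ x ∈ F, π x = 0) ∧ ∀ x ∈ N \ F, 0 < π x

/-- `p` is a convex cover polynomial: some finitely many pairwise disjoint faces of `New(p)`
cover `Support(p)`. -/
def IsConvexCover {n : ℕ} (p : MvPolynomial (Fin n) ℝ) : Prop :=
  ∃ (u : ℕ) (F : Fin u → Set (Fin n → ℝ)),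
    (∀ i, IsFace (newton p) (F i)) ∧
    (∀ i j, i ≠ j → Disjoint (F i) (F j)) ∧
    toR '' (p.support : Set (Fin n →₀ ℕ)) ⊆ ⋃ i, F i

end

open MvPolynomial

/-- An interior point of `N` lies on no face of `N`. -/
theorem IsFace.notMem_of_mem_interior {n : ℕ} {N F : Set (Fin n → ℝ)} (hF : IsFace N F)
    {x : Fin n → ℝ} (hx : x ∈ interior N) : x ∉ F := by
  obtain ⟨hFN, -, hne, π, hzero, hpos⟩ := hF
  intro hxF
  obtain ⟨y, hyN, hyF⟩ : ∃ y ∈ N, y ∉ F := by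
    by_contra! h
    exact hne (hFN.antisymm h)
  have hcont : Continuous fun t : ℝ => AffineMap.lineMap (k := ℝ) x y t :=
    AffineMap.lineMap_continuous
  have hnhds : ∀ᶠ t in nhds (0 : ℝ), AffineMap.lineMap (k := ℝ) x y t ∈ N := by
    refine hcont.continuousAt.eventually_mem ?_
    simpa using mem_interior_iff_mem_nhds.mp hx
  obtain ⟨ε, hε, hball⟩ := Metric.eventually_nhds_iff.mp hnhds
  have hz : AffineMap.lineMap (k := ℝ) x y (-(ε / 2)) ∈ N := by
    apply hball
    rw [Real.dist_eq, sub_zero, abs_neg, abs_of_pos (by positivity)]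
    linarith
  have hval : π (AffineMap.lineMap (k := ℝ) x y (-(ε / 2))) = -(ε / 2) * π y := by
    rw [AffineMap.apply_lineMap, hzero x hxF]
    simp [AffineMap.lineMap_apply]
  have hy : 0 < π y := hpos y ⟨hyN, hyF⟩
  have hneg : -(ε / 2) * π y < 0 := mul_neg_of_neg_of_pos (by linarith) hy
  by_cases h : AffineMap.lineMap (k := ℝ) x y (-(ε / 2)) ∈ F
  · linarith [hzero _ h]
  · linarith [hpos _ ⟨hz, h⟩]

/-- A polynomial with a support point in the interior of its Newton polytope is not a convex
cover polynomial. -/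
theorem not_isConvexCover_of_mem_interior {n : ℕ} {p : MvPolynomial (Fin n) ℝ}
    {a : Fin n →₀ ℕ} (ha : a ∈ p.support) (hint : toR a ∈ interior (newton p)) :
    ¬ IsConvexCover p := by
  rintro ⟨u, F, hface, -, hcover⟩
  obtain ⟨i, hi⟩ := Set.mem_iUnion.mp (hcover ⟨a, ha, rfl⟩)
  exact (hface i).notMem_of_mem_interior hint hi

/-- The exponent vector `(a, b, c)`. -/
noncomputable def exponent (a b c : ℕ) : Fin 3 →₀ ℕ :=
  Finsupp.single 0 a + Finsupp.single 1 b + Finsupp.single 2 c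

theorem exponent_inj {a b c a' b' c' : ℕ} :
    exponent a b c = exponent a' b' c' ↔ a = a' ∧ b = b' ∧ c = c' := by
  simp [exponent, Finsupp.ext_iff, Fin.forall_fin_succ, Finsupp.single_apply]

theorem toR_exponent (a b c : ℕ) : toR (exponent a b c) = ![(a : ℝ), b, c] := by
  funext i
  fin_cases i <;> simp [toR, exponent]

theorem monomial_exponent (a b c : ℕ) (r : ℝ) :
    monomial (exponent a b c) r = C r * X 0 ^ a * X 1 ^ b * X 2 ^ c := by
  rw [← mul_one r, ← C_mul_monomial, X_pow_eq_monomial, X_pow_eq_monomial, X_pow_eq_monomial,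
    mul_one, mul_assoc, mul_assoc, monomial_mul, monomial_mul, exponent, add_assoc]
  simp

/-- A convex set containing the five outer support points is a neighbourhood of `(2, 2, 2)`. -/
theorem mem_interior_of_convex_of_vertices_mem {N : Set (Fin 3 → ℝ)} (hN : Convex ℝ N)
    (h₁ : ![4, 2, 2] ∈ N) (h₂ : ![2, 4, 2] ∈ N) (h₃ : ![0, 0, 2] ∈ N)
    (h₄ : ![2, 2, 0] ∈ N) (h₅ : ![2, 2, 4] ∈ N) : ![2, 2, 2] ∈ interior N := by
  rw [mem_interior_iff_mem_nhds, Metric.mem_nhds_iff]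
  refine ⟨1 / 10, by norm_num, fun x hx => ?_⟩
  rw [Metric.mem_ball, dist_pi_lt_iff (by norm_num)] at hx
  have hx₀ := abs_lt.mp (Real.dist_eq _ _ ▸ hx 0)
  have hx₁ := abs_lt.mp (Real.dist_eq _ _ ▸ hx 1)
  have hx₂ := abs_lt.mp (Real.dist_eq _ _ ▸ hx 2)
  simp only [Matrix.cons_val] at hx₀ hx₁ hx₂
  let w : Fin 5 → ℝ := ![1 / 6 + (x 0 - 2) / 3 - (x 1 - 2) / 6,
    1 / 6 + (x 1 - 2) / 3 - (x 0 - 2) / 6, 1 / 6 - (x 0 - 2) / 6 - (x 1 - 2) / 6,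
    1 / 4 - (x 2 - 2) / 4, 1 / 4 + (x 2 - 2) / 4]
  let v : Fin 5 → Fin 3 → ℝ :=
    ![![4, 2, 2], ![2, 4, 2], ![0, 0, 2], ![2, 2, 0], ![2, 2, 4]]
  have hw : ∀ i ∈ Finset.univ, 0 ≤ w i := by
    intro i _
    fin_cases i <;> simp [w] <;> linarith
  have hsum : ∑ i, w i = 1 := by
    simp [w, Fin.sum_univ_succ]
    ring
  have hv : ∀ i ∈ Finset.univ, v i ∈ N := by
    intro i _
    fin_cases i <;> assumption
  convert hN.sum_mem hw hsum hv using 1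
  funext j
  fin_cases j <;> simp [w, v, Fin.sum_univ_succ] <;> ring

/-- The polynomial
`p = x₁⁴x₂²x₃² + x₁²x₂⁴x₃² − 2x₁²x₂²x₃² + x₃² + x₁²x₂² + x₁²x₂²x₃⁴`
is not a convex cover polynomial; its support point `(2,2,2)` lies in the interior of
its Newton polytope. -/
theorem statement18 :
    let p : MvPolynomial (Fin 3) ℝ :=
      (X 0) ^ 4 * (X 1) ^ 2 * (X 2) ^ 2 + (X 0) ^ 2 * (X 1) ^ 4 * (X 2) ^ 2
        - 2 * (X 0) ^ 2 * (X 1) ^ 2 * (X 2) ^ 2 + (X 2) ^ 2 + (X 0) ^ 2 * (X 1) ^ 2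
        + (X 0) ^ 2 * (X 1) ^ 2 * (X 2) ^ 4
    let e : Fin 3 →₀ ℕ := Finsupp.single 0 2 + Finsupp.single 1 2 + Finsupp.single 2 2
    e ∈ p.support ∧
    toR e ∈ interior (newton p) ∧
    ¬ IsConvexCover p := by
  intro p e
  have hp : p = monomial (exponent 4 2 2) 1 + monomial (exponent 2 4 2) 1
      + monomial (exponent 2 2 2) (-2) + monomial (exponent 0 0 2) 1
      + monomial (exponent 2 2 0) 1 + monomial (exponent 2 2 4) 1 := by
    have hC : (C (-2) : MvPolynomial (Fin 3) ℝ) = -2 := by rw [map_neg, map_ofNat]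
    simp only [monomial_exponent, hC, map_one, p]
    ring
  have he : exponent 2 2 2 ∈ p.support := by
    simp [hp, mem_support_iff, coeff_monomial, exponent_inj]
  have hmem : ∀ {a b c : ℕ}, exponent a b c ∈ p.support →
      ![(a : ℝ), b, c] ∈ newton p := fun {a b c} h =>
    subset_convexHull ℝ _ ⟨_, h, toR_exponent a b c⟩
  have hint : toR (exponent 2 2 2) ∈ interior (newton p) := by
    have h₁ : exponent 4 2 2 ∈ p.support := by
      simp [hp, mem_support_iff, coeff_monomial, exponent_inj]
    have h₂ : exponent 2 4 2 ∈ p.support := by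
      simp [hp, mem_support_iff, coeff_monomial, exponent_inj]
    have h₃ : exponent 0 0 2 ∈ p.support := by
      simp [hp, mem_support_iff, coeff_monomial, exponent_inj]
    have h₄ : exponent 2 2 0 ∈ p.support := by
      simp [hp, mem_support_iff, coeff_monomial, exponent_inj]
    have h₅ : exponent 2 2 4 ∈ p.support := by
      simp [hp, mem_support_iff, coeff_monomial, exponent_inj]
    have hconv : Convex ℝ (newton p) := convex_convexHull ℝ _
    simpa [toR_exponent] using mem_interior_of_convex_of_vertices_mem hconv
      (by simpa using hmem h₁) (by simpa using hmem h₂) (by simpa using hmem h₃)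
      (by simpa using hmem h₄) (by simpa using hmem h₅)
  exact ⟨he, hint, not_isConvexCover_of_mem_interior he hint⟩
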